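/- Let (i,j) ∈ E be an edge of a finite connected simple graph G with ρ_min ≥ 2, let α_i, α_j ∈ [0,1), and suppose c_BF(i,j) ≤ ζ for some ζ ∈ ℝ. Set b(ζ) = [ζ − 𝔖(i,j)]₊, △_max = min{ρ_min − 1, b(ζ)/𝔗(i,j)}, þ⋆ = ρ_max·(ρ_max − 1), and for t ∈ ℝ define A_u(t) = (ρ_u − 1 − t)·w_u for u ∈ {i,j}, A_min(t) = min{A_i(t), A_j(t)}, B(t) = (þ⋆/Σ)·(b(ζ) − 𝔗(i,j)·t), D(t) = (ρ_i + ρ_j − 2 − 2t)/Σ, C(t) = min{t·|w_i − w_j|, A_i(t) + A_j(t)}, and Ψ̂(t) = −1 + 2(z_i + z_j) + (r_i + r̄_i + r_j + r̄_j) + 2·w_∧·t + [min{A_min(t), B(t), D(t)}]₊ + C(t), where w_∧ = min{w_i, w_j}. Then c_OR(i,j) ≤ max over t ∈ [0, △_max] of Ψ̂(t). -/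

import Mathlib

namespace Curv

open Finset

noncomputable section

variable {V : Type*} [Fintype V] [DecidableEq V] (G : SimpleGraph V) [DecidableRel G.Adj]

/-- `μ` is a probability distribution on the (finite) vertex set. -/
def IsProb (μ : V → ℝ) : Prop := (∀ x, 0 ≤ μ x) ∧ ∑ x, μ x = 1

/-- `π` is a coupling of `μ` and `ν`. -/
def IsCoupling (μ ν : V → ℝ) (π : V → V → ℝ) : Prop :=
  (∀ x y, 0 ≤ π x y) ∧ (∀ x, ∑ y, π x y = μ x) ∧ (∀ y, ∑ x, π x y = ν y)

/-- Transport cost of a plan `π` with respect to the shortest-path graph distance. -/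
def cost (π : V → V → ℝ) : ℝ := ∑ x, ∑ y, (G.dist x y : ℝ) * π x y

/-- Wasserstein-1 distance between two distributions on the vertex set. -/
def W1 (μ ν : V → ℝ) : ℝ := sInf {c : ℝ | ∃ π, IsCoupling μ ν π ∧ cost G π = c}

/-- Dirac mass at `u`. -/
def dirac (u : V) : V → ℝ := fun x => if x = u then 1 else 0

/-- Uniform distribution on the neighbours of `u`. -/
def unif (u : V) : V → ℝ := fun x => if G.Adj u x then ((G.degree u : ℝ))⁻¹ else 0

/-- Lazy random-walk measure with laziness parameter `α`. -/
def mGen (α : ℝ) (u : V) : V → ℝ := fun x => α * dirac u x + (1 - α) * unif G u x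

/-- Canonical laziness `1/(deg u + 1)`. -/
def alphaL (u : V) : ℝ := ((G.degree u : ℝ) + 1)⁻¹

/-- The lazy random-walk measure `m_u`. -/
def mLazy (u : V) : V → ℝ := mGen G (alphaL G u) u

/-- Ollivier–Ricci curvature (lazy). -/
def cOR (i j : V) : ℝ := 1 - W1 G (mLazy G i) (mLazy G j)

/-- Non-lazy Ollivier–Ricci curvature. -/
def cOR0 (i j : V) : ℝ := 1 - W1 G (unif G i) (unif G j)

/-- Positive part `[x]₊`. -/
def pos (x : ℝ) : ℝ := max x 0

/-- Triangle count `△(u,v)`. -/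
def tri (u v : V) : ℕ := (G.neighborFinset u ∩ G.neighborFinset v).card

/-- Unique neighbours `N(u) \ (N(v) ∪ {v})`. -/
def uniq (u v : V) : Finset V := G.neighborFinset u \ insert v (G.neighborFinset v)

/-- `ξ_u(u,v)`: unique neighbours of `u` having a neighbour among unique neighbours of `v`. -/
def xiSet (u v : V) : Finset V := (uniq G u v).filter fun k => ∃ w ∈ uniq G v u, G.Adj k w

/-- `Ξ_uv`. -/
def Xi (u v : V) : ℕ := (xiSet G u v).card + (xiSet G v u).card

/-- `□̃(k,u,v) = |N(k) ∩ (N(v)\(N(u)∪{u}))|`. -/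
def boxT (k u v : V) : ℕ := (G.neighborFinset k ∩ uniq G v u).card

/-- `ϖ_max(u,v)`. -/
def varpi (u v : V) : ℕ :=
  max (((G.neighborFinset u).erase v).sup fun k => boxT G k u v)
      (((G.neighborFinset v).erase u).sup fun w => boxT G w v u)

/-- `þ_max(u,v) = ϖ_max(u,v)·max{ρ_u,ρ_v}`. -/
def thMax (u v : V) : ℕ := varpi G u v * max (G.degree u) (G.degree v)

/-- Edgewise 4-cycle coefficient `C₄(u,v)`. -/
def C4 (u v : V) : ℝ := if 0 < Xi G u v then (Xi G u v : ℝ) / (thMax G u v : ℝ) else 0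

/-- Graph-wide 4-cycle constant `C₄(G)`. -/
def C4Graph : ℝ := sSup {x : ℝ | ∃ u v, G.Adj u v ∧ x = C4 G u v}

def rhoMin (i j : V) : ℕ := min (G.degree i) (G.degree j)

def rhoMax (i j : V) : ℕ := max (G.degree i) (G.degree j)

/-- `𝔖(i,j)`. -/
def frakS (i j : V) : ℝ := 2 / (G.degree i : ℝ) + 2 / (G.degree j : ℝ) - 2

/-- `𝔗(i,j)`. -/
def frakT (i j : V) : ℝ := 2 / (rhoMax G i j : ℝ) + 1 / (rhoMin G i j : ℝ)

/-- `𝔎(i,j)`. -/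
def frakK (i j : V) : ℝ := 1 - 1 / (rhoMin G i j : ℝ) - 1 / (rhoMax G i j : ℝ)

/-- `Z_min(i,j)`. -/
def Zmin (i j : V) : ℝ := (tri G i j : ℝ) / (rhoMin G i j : ℝ)

/-- `Z_max(i,j)`. -/
def Zmax (i j : V) : ℝ := (tri G i j : ℝ) / (rhoMax G i j : ℝ)

/-- Balanced Forman curvature. -/
def cBF (i j : V) : ℝ :=
  if rhoMin G i j = 1 then 0
  else frakS G i j + frakT G i j * (tri G i j : ℝ) + C4 G i j

/-- `M` is a matching in the cross-edge bipartite graph `B_ij`. -/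
def IsCrossMatching (i j : V) (M : Finset (V × V)) : Prop :=
  (∀ p ∈ M, p.1 ∈ uniq G i j ∧ p.2 ∈ uniq G j i ∧ G.Adj p.1 p.2) ∧
  (∀ p ∈ M, ∀ q ∈ M, p ≠ q → p.1 ≠ q.1 ∧ p.2 ≠ q.2)

/-- Maximum matching size `𝔪(i,j)` in the cross-edge bipartite graph. -/
def matchNum (i j : V) : ℕ :=
  sSup {n : ℕ | ∃ M : Finset (V × V), IsCrossMatching G i j M ∧ M.card = n}

/-- `𝒮(i,j) = 𝔪(i,j)/ρ_max`. -/
def SS (i j : V) : ℝ := (matchNum G i j : ℝ) / (rhoMax G i j : ℝ)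

/-- Lazy per-neighbour weight `w_u = (1-α)/ρ_u`. -/
def wA (α : ℝ) (u : V) : ℝ := (1 - α) / (G.degree u : ℝ)

/-- Lazy conductance sum `Σ`. -/
def SigmaA (αi αj : ℝ) (i j : V) : ℝ :=
  (G.degree i : ℝ) / (1 - αi) + (G.degree j : ℝ) / (1 - αj)

/-- `Const_α`. -/
def ConstA (αi αj : ℝ) (i j : V) : ℝ :=
  -1 + 2 * (min αi ((1 - αj) / (G.degree j : ℝ)) + min αj ((1 - αi) / (G.degree i : ℝ)))
    + (pos (αi - (1 - αj) / (G.degree j : ℝ)) + pos ((1 - αj) / (G.degree j : ℝ) - αi)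
      + pos (αj - (1 - αi) / (G.degree i : ℝ)) + pos ((1 - αi) / (G.degree i : ℝ) - αj))
    + ((G.degree i : ℝ) + (G.degree j : ℝ) - 2) / SigmaA G αi αj i j

/-- `Slope_α`. -/
def SlopeA (αi αj : ℝ) (i j : V) : ℝ := wA G αi i + wA G αj j - 2 / SigmaA G αi αj i j

/-- `α_⋆`: `α_min` when the non-lazy curvature is nonnegative, `α_max` otherwise. -/
def alphaStar (i j : V) : ℝ :=
  if 0 ≤ cOR0 G i j then min (alphaL G i) (alphaL G j) else max (alphaL G i) (alphaL G j)

/-- `Δ_ij(α) = α_max − α_min` for the canonical laziness. -/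
def DeltaL (i j : V) : ℝ := max (alphaL G i) (alphaL G j) - min (alphaL G i) (alphaL G j)

/-- BF budget `b(ζ) = [ζ − 𝔖]₊`. -/
def bBudget (i j : V) (z : ℝ) : ℝ := pos (z - frakS G i j)

/-- `þ⋆ = ρ_max (ρ_max − 1)`. -/
def thStar (i j : V) : ℝ := (rhoMax G i j : ℝ) * ((rhoMax G i j : ℝ) - 1)

/-- `△_max = min{ρ_min − 1, b(ζ)/𝔗}`. -/
def triBound (i j : V) (z : ℝ) : ℝ :=
  min ((rhoMin G i j : ℝ) - 1) (bBudget G i j z / frakT G i j)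

/-- `A_u(t) = (ρ_u − 1 − t)·w_u`. -/
def Afun (α : ℝ) (u : V) (t : ℝ) : ℝ := ((G.degree u : ℝ) - 1 - t) * wA G α u

/-- The piecewise-affine upper envelope `Ψ̂(t)`. -/
def PsiHat (αi αj : ℝ) (i j : V) (z t : ℝ) : ℝ :=
  -1 + 2 * (min αi ((1 - αj) / (G.degree j : ℝ)) + min αj ((1 - αi) / (G.degree i : ℝ)))
    + (pos (αi - (1 - αj) / (G.degree j : ℝ)) + pos ((1 - αj) / (G.degree j : ℝ) - αi)
      + pos (αj - (1 - αi) / (G.degree i : ℝ)) + pos ((1 - αi) / (G.degree i : ℝ) - αj))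
    + 2 * min (wA G αi i) (wA G αj j) * t
    + pos (min (min (Afun G αi i t) (Afun G αj j t))
        (min (thStar G i j / SigmaA G αi αj i j * (bBudget G i j z - frakT G i j * t))
          (((G.degree i : ℝ) + (G.degree j : ℝ) - 2 - 2 * t) / SigmaA G αi αj i j)))
    + min (t * |wA G αi i - wA G αj j|) (Afun G αi i t + Afun G αj j t)

/-!
A coupling of `m_i` and `m_j` only moves mass from the closed neighbourhood of `i` to that of `j`,
and there `2 - dist x y` is at most `𝟙[{i,j}](x) + 𝟙[{i,j}](y) + 𝟙[ξ_i × ξ_j](x,y)` plus a term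
for the common neighbours `C`, which may be taken to be either `𝟙[C](x) + 𝟙[C](y)` or
`𝟙[uniq_i](x) + 𝟙[uniq_j](y) + 2 · 𝟙[C × C](x,y)`. Integrating, the `{i,j}` terms see only the
marginals, and the two choices for the common neighbours produce the two branches of the minimum
`C(t)` at `t = △(i,j)`.

The mass `e` moved from `ξ_i` to `ξ_j` is at most `|ξ_u| w_u` and `A_u(△)` for both `u`; dividing by
`w_u` and adding over `u` gives `e Σ ≤ Ξ` and `e Σ ≤ ρ_i + ρ_j - 2 - 2△`. Finally `Ξ ≤ þ⋆ C₄`, and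
the hypothesis on `c_BF` leaves `C₄` at most `b(ζ) - 𝔗 △`. So `1 - cost π ≤ Ψ̂(△)`, where
`△ ∈ [0, △_max]`.
-/

local notation "𝟙[" S "]" => Set.indicator (SetLike.coe S) fun _ => (1 : ℝ)

/-! ### Couplings -/

section Coupling

variable {X : Type*} [Fintype X] {H : SimpleGraph X} {μ ν : X → ℝ} {π : X → X → ℝ}

/-- The mass `π(S × T)` that the plan `π` moves from `S` into `T`. -/
def rectMass (π : X → X → ℝ) (S T : Finset X) : ℝ := ∑ x ∈ S, ∑ y ∈ T, π x y

lemma IsCoupling.prod (hμ : IsProb μ) (hν : IsProb ν) :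
    IsCoupling μ ν fun x y => μ x * ν y := by
  refine ⟨fun x y => mul_nonneg (hμ.1 x) (hν.1 y), fun x => ?_, fun y => ?_⟩
  · rw [← mul_sum, hν.2, mul_one]
  · rw [← sum_mul, hμ.2, one_mul]

lemma le_W1 (hμ : IsProb μ) (hν : IsProb ν) {c : ℝ}
    (h : ∀ π, IsCoupling μ ν π → c ≤ cost H π) : c ≤ W1 H μ ν := by
  refine le_csInf ⟨_, _, IsCoupling.prod hμ hν, rfl⟩ ?_
  rintro _ ⟨π, hπ, rfl⟩
  exact h π hπ

namespace IsCoupling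

lemma le_left (hπ : IsCoupling μ ν π) (x y : X) : π x y ≤ μ x :=
  hπ.2.1 x ▸ single_le_sum (fun y _ => hπ.1 x y) (mem_univ y)

lemma le_right (hπ : IsCoupling μ ν π) (x y : X) : π x y ≤ ν y :=
  hπ.2.2 y ▸ single_le_sum (f := fun x => π x y) (fun x _ => hπ.1 x y) (mem_univ x)

lemma rectMass_le_sum_left (hπ : IsCoupling μ ν π) (S T : Finset X) :
    rectMass π S T ≤ ∑ x ∈ S, μ x :=
  sum_le_sum fun x _ => hπ.2.1 x ▸
    sum_le_sum_of_subset_of_nonneg (subset_univ T) fun y _ _ => hπ.1 x y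

lemma rectMass_le_sum_right (hπ : IsCoupling μ ν π) (S T : Finset X) :
    rectMass π S T ≤ ∑ y ∈ T, ν y := by
  rw [rectMass, sum_comm]
  exact sum_le_sum fun y _ => hπ.2.2 y ▸
    sum_le_sum_of_subset_of_nonneg (subset_univ S) fun x _ _ => hπ.1 x y

lemma const_sub_cost_le (hπ : IsCoupling μ ν π) (hμ : ∑ x, μ x = 1) {c : ℝ} {f g : X → ℝ}
    {h : X → X → ℝ}
    (hdist : ∀ x y, μ x ≠ 0 → ν y ≠ 0 → c - H.dist x y ≤ f x + g y + h x y) :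
    c - cost H π ≤ ∑ x, f x * μ x + ∑ y, g y * ν y + ∑ x, ∑ y, h x y * π x y := by
  have hpoint (x y : X) : (c - H.dist x y) * π x y ≤ (f x + g y + h x y) * π x y := by
    rcases (hπ.1 x y).eq_or_lt with hzero | hpos
    · simp only [← hzero, mul_zero, le_refl]
    · exact mul_le_mul_of_nonneg_right (hdist x y (hpos.trans_le (hπ.le_left x y)).ne'
        (hpos.trans_le (hπ.le_right x y)).ne') hpos.le
  calc c - cost H π = ∑ x, ∑ y, (c - H.dist x y) * π x y := by
        simp only [sub_mul, sum_sub_distrib, ← mul_sum, hπ.2.1, hμ, mul_one, cost]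
    _ ≤ ∑ x, ∑ y, (f x + g y + h x y) * π x y :=
        sum_le_sum fun x _ => sum_le_sum fun y _ => hpoint x y
    _ = _ := by
        simp only [add_mul, sum_add_distrib, ← hπ.2.1, ← hπ.2.2, mul_sum]
        rw [sum_comm (f := fun x y => g y * π x y)]

end IsCoupling

lemma sum_indicator_mul (S : Finset X) (μ : X → ℝ) : ∑ x, 𝟙[S] x * μ x = ∑ x ∈ S, μ x := by
  classical simp [Set.indicator_apply]

lemma sum_sum_indicator_product_mul (S T : Finset X) (π : X → X → ℝ) :
    ∑ x, ∑ y, 𝟙[S ×ˢ T] (x, y) * π x y = rectMass π S T := by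
  rw [← Fintype.sum_prod_type', sum_indicator_mul (S ×ˢ T) fun p => π p.1 p.2, sum_product,
    rectMass]

end Coupling

/-! ### Lazy random-walk measures -/

section LazyMeasure

lemma mGen_self (α : ℝ) (u : V) : mGen G α u u = α := by
  simp [mGen, dirac, unif]

variable {G}

lemma mGen_of_adj (α : ℝ) {u x : V} (h : G.Adj u x) : mGen G α u x = wA G α u := by
  simp [mGen, dirac, unif, h.ne', h, wA, div_eq_mul_inv]

lemma eq_or_adj_of_mGen_ne_zero {α : ℝ} {u x : V} (h : mGen G α u x ≠ 0) :
    x = u ∨ G.Adj u x := by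
  contrapose! h
  simp [mGen, dirac, unif, h]

lemma sum_mGen_of_adj (α : ℝ) {u : V} {S : Finset V} (h : ∀ x ∈ S, G.Adj u x) :
    ∑ x ∈ S, mGen G α u x = S.card * wA G α u := by
  rw [sum_congr rfl fun x hx => mGen_of_adj α (h x hx), sum_const, nsmul_eq_mul]

lemma sum_mGen_pair_left (α : ℝ) {u v : V} (h : G.Adj u v) :
    ∑ x ∈ {u, v}, mGen G α u x = α + wA G α u := by
  rw [sum_pair h.ne, mGen_self, mGen_of_adj α h]

lemma sum_mGen_pair_right (α : ℝ) {u v : V} (h : G.Adj u v) :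
    ∑ x ∈ {u, v}, mGen G α v x = α + wA G α v := by
  rw [pair_comm, sum_mGen_pair_left α h.symm]

lemma sum_mGen (α : ℝ) {u : V} (hu : 0 < G.degree u) : ∑ x, mGen G α u x = 1 := by
  have hdirac : ∑ x, dirac u x = 1 := by simp [dirac]
  have hunif : ∑ x, unif G u x = 1 := by
    simp [unif, ← sum_filter, ← G.neighborFinset_eq_filter, hu.ne']
  simp only [mGen, sum_add_distrib, ← mul_sum, hdirac, hunif]
  ring

lemma isProb_mGen {α : ℝ} (hα : α ∈ Set.Icc (0 : ℝ) 1) {u : V} (hu : 0 < G.degree u) :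
    IsProb (mGen G α u) := by
  refine ⟨fun x => add_nonneg (mul_nonneg hα.1 ?_) (mul_nonneg (sub_nonneg.2 hα.2) ?_),
    sum_mGen α hu⟩
  · unfold dirac; positivity
  · unfold unif; positivity

lemma wA_pos {X : Type*} [Fintype X] {H : SimpleGraph X} [DecidableRel H.Adj] {α : ℝ}
    (hα : α < 1) {u : X} (hu : 0 < H.degree u) : 0 < wA H α u :=
  div_pos (sub_pos.2 hα) (Nat.cast_pos.2 hu)

lemma SigmaA_eq_inv_wA_add_inv_wA {X : Type*} [Fintype X] (H : SimpleGraph X)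
    [DecidableRel H.Adj] (αi αj : ℝ) (i j : X) :
    SigmaA H αi αj i j = (wA H αi i)⁻¹ + (wA H αj j)⁻¹ := by
  simp only [SigmaA, wA, inv_div]

end LazyMeasure

/-! ### Neighbourhoods of an edge -/

section Neighbourhood

/-- The common neighbours of `u` and `v`, whose number is `△(u,v)`. -/
def common (u v : V) : Finset V := G.neighborFinset u ∩ G.neighborFinset v

variable {G}

lemma mem_common {u v x : V} : x ∈ common G u v ↔ G.Adj u x ∧ G.Adj v x := by
  simp [common]

lemma mem_uniq {u v x : V} : x ∈ uniq G u v ↔ G.Adj u x ∧ x ≠ v ∧ ¬G.Adj v x := by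
  simp [uniq]

lemma mem_xiSet {u v x : V} : x ∈ xiSet G u v ↔ x ∈ uniq G u v ∧ ∃ y ∈ uniq G v u, G.Adj x y :=
  mem_filter

lemma tri_comm (u v : V) : tri G u v = tri G v u := by
  rw [tri, tri, inter_comm]

lemma card_uniq_add_tri_add_one {u v : V} (h : G.Adj u v) :
    (uniq G u v).card + tri G u v + 1 = G.degree u := by
  have hv : v ∈ G.neighborFinset u \ G.neighborFinset v := by simp [h]
  rw [uniq, sdiff_insert, tri, add_right_comm, card_erase_add_one hv,
    card_sdiff_add_card_inter, G.card_neighborFinset_eq_degree]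

lemma sum_mGen_common_left (α : ℝ) (u v : V) :
    ∑ x ∈ common G u v, mGen G α u x = tri G u v * wA G α u :=
  sum_mGen_of_adj α fun _ hx => (mem_common.1 hx).1

lemma sum_mGen_common_right (α : ℝ) (u v : V) :
    ∑ x ∈ common G u v, mGen G α v x = tri G u v * wA G α v :=
  sum_mGen_of_adj α fun _ hx => (mem_common.1 hx).2

lemma sum_mGen_uniq (α : ℝ) {u v : V} (h : G.Adj u v) :
    ∑ x ∈ uniq G u v, mGen G α u x = Afun G α u (tri G u v) := by
  rw [sum_mGen_of_adj α fun _ hx => (mem_uniq.1 hx).1, Afun, ← card_uniq_add_tri_add_one h]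
  push_cast
  ring

lemma sum_mGen_xiSet (α : ℝ) (u v : V) :
    ∑ x ∈ xiSet G u v, mGen G α u x = (xiSet G u v).card * wA G α u :=
  sum_mGen_of_adj α fun _ hx => (mem_uniq.1 (mem_xiSet.1 hx).1).1

lemma sum_mGen_xiSet_le_Afun {α : ℝ} (hα : α < 1) {u v : V} (h : G.Adj u v) :
    ∑ x ∈ xiSet G u v, mGen G α u x ≤ Afun G α u (tri G u v) := by
  rw [← sum_mGen_uniq α h]
  refine sum_le_sum_of_subset_of_nonneg (filter_subset _ _) fun x hx _ => ?_
  rw [mGen_of_adj α (mem_uniq.1 hx).1]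
  exact (wA_pos hα h.degree_pos_left).le

lemma tri_add_one_le_rhoMin {u v : V} (h : G.Adj u v) : tri G u v + 1 ≤ rhoMin G u v := by
  have hu := card_uniq_add_tri_add_one h
  have hv := card_uniq_add_tri_add_one h.symm
  rw [tri_comm v u] at hv
  exact le_min (by lia) (by lia)

end Neighbourhood

/-! ### The four-cycle term and the Balanced Forman budget -/

section FourCycle

variable {G} {i j : V}

lemma boxT_add_one_le_degree (k : V) (h : G.Adj i j) : boxT G k i j + 1 ≤ G.degree j := by
  have hbox : boxT G k i j ≤ (uniq G j i).card := card_le_card inter_subset_right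
  have := card_uniq_add_tri_add_one h.symm
  lia

lemma varpi_add_one_le_rhoMax (h : G.Adj i j) : varpi G i j + 1 ≤ rhoMax G i j := by
  have hi (k : V) : boxT G k j i + 1 ≤ rhoMax G i j :=
    (boxT_add_one_le_degree k h.symm).trans (le_max_left _ _)
  have hj (k : V) : boxT G k i j + 1 ≤ rhoMax G i j :=
    (boxT_add_one_le_degree k h).trans (le_max_right _ _)
  have hvarpi : varpi G i j ≤ rhoMax G i j - 1 :=
    max_le (Finset.sup_le fun k _ => Nat.le_sub_one_of_lt (hj k))
      (Finset.sup_le fun k _ => Nat.le_sub_one_of_lt (hi k))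
  have := hi i
  lia

lemma sup_boxT_pos (h : (xiSet G i j).Nonempty) :
    0 < ((G.neighborFinset i).erase j).sup fun k => boxT G k i j := by
  obtain ⟨k, hk⟩ := h
  obtain ⟨hki, w, hw, hkw⟩ := mem_xiSet.1 hk
  obtain ⟨hik, hkj, -⟩ := mem_uniq.1 hki
  have hbox : 0 < boxT G k i j := card_pos.2 ⟨w, by simp [hkw, hw]⟩
  exact hbox.trans_le <| le_sup (f := fun k => boxT G k i j) (by simp [hik, hkj])

lemma varpi_pos (h : 0 < Xi G i j) : 0 < varpi G i j := by
  rcases Nat.add_pos_iff_pos_or_pos.1 h with hi | hj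
  · exact lt_max_of_lt_left (sup_boxT_pos (card_pos.1 hi))
  · exact lt_max_of_lt_right (sup_boxT_pos (card_pos.1 hj))

lemma thMax_le_thStar (h : G.Adj i j) : (thMax G i j : ℝ) ≤ thStar G i j := by
  have hvarpi : (varpi G i j : ℝ) + 1 ≤ rhoMax G i j := mod_cast varpi_add_one_le_rhoMax h
  rw [thMax, thStar, Nat.cast_mul, mul_comm]
  exact mul_le_mul_of_nonneg_left (le_sub_iff_add_le.2 hvarpi) (Nat.cast_nonneg _)

variable (G i j) in
lemma C4_nonneg : 0 ≤ C4 G i j := by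
  unfold C4
  positivity

lemma Xi_le_thStar_mul_C4 (h : G.Adj i j) : (Xi G i j : ℝ) ≤ thStar G i j * C4 G i j := by
  rcases Nat.eq_zero_or_pos (Xi G i j) with hXi | hXi
  · simp [C4, hXi]
  have hrho : 0 < rhoMax G i j := (Nat.succ_pos _).trans_le (varpi_add_one_le_rhoMax h)
  have hth : (thMax G i j : ℝ) ≠ 0 := Nat.cast_ne_zero.2 (Nat.mul_pos (varpi_pos hXi) hrho).ne'
  calc (Xi G i j : ℝ) = thMax G i j * C4 G i j := by rw [C4, if_pos hXi, mul_div_cancel₀ _ hth]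
    _ ≤ thStar G i j * C4 G i j :=
        mul_le_mul_of_nonneg_right (thMax_le_thStar h) (C4_nonneg G i j)

lemma C4_eq_zero_of_uniq_eq_empty (h : uniq G i j = ∅ ∨ uniq G j i = ∅) : C4 G i j = 0 := by
  have hXi : Xi G i j = 0 := by rcases h with h | h <;> simp [Xi, xiSet, h]
  simp [C4, hXi]

lemma C4_eq_zero_of_rhoMin_eq_one (h : G.Adj i j) (hmin : rhoMin G i j = 1) : C4 G i j = 0 := by
  have hi := card_uniq_add_tri_add_one h
  have hj := card_uniq_add_tri_add_one h.symm
  refine C4_eq_zero_of_uniq_eq_empty ?_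
  rcases min_choice (G.degree i) (G.degree j) with hdeg | hdeg <;> rw [rhoMin, hdeg] at hmin
  · exact .inl (card_eq_zero.1 (by lia))
  · exact .inr (card_eq_zero.1 (by lia))

lemma frakT_mul_tri_add_C4_le_bBudget (h : G.Adj i j) {z : ℝ} (hBF : cBF G i j ≤ z) :
    frakT G i j * tri G i j + C4 G i j ≤ bBudget G i j z := by
  by_cases hmin : rhoMin G i j = 1
  · have htri : tri G i j = 0 := by have := tri_add_one_le_rhoMin h; lia
    simp [htri, C4_eq_zero_of_rhoMin_eq_one h hmin, bBudget, pos]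
  · rw [cBF, if_neg hmin] at hBF
    exact le_max_of_le_left (by linarith)

lemma tri_mem_Icc_triBound (h : G.Adj i j) {z : ℝ} (hBF : cBF G i j ≤ z) :
    (tri G i j : ℝ) ∈ Set.Icc 0 (triBound G i j z) := by
  have htri : (tri G i j : ℝ) + 1 ≤ rhoMin G i j := mod_cast tri_add_one_le_rhoMin h
  have hmin : (0 : ℝ) < rhoMin G i j := (Nat.cast_add_one_pos _).trans_le htri
  have hT : 0 < frakT G i j := by unfold frakT; positivity
  refine ⟨Nat.cast_nonneg _, le_min (le_sub_iff_add_le.2 htri) ((le_div_iff₀' hT).2 ?_)⟩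
  linarith [frakT_mul_tri_add_C4_le_bBudget h hBF, C4_nonneg G i j]

end FourCycle

/-! ### Pointwise bounds on the graph distance -/

section Distance

lemma two_sub_dist_le {X : Type*} {H : SimpleGraph X} {x y : X} (hxy : H.Reachable x y) {r : ℝ}
    (hr : 0 ≤ r) (heq : x = y → 2 ≤ r) (hadj : H.Adj x y → 1 ≤ r) : 2 - (H.dist x y : ℝ) ≤ r := by
  rcases Nat.lt_or_ge (H.dist x y) 2 with hnear | hfar
  · interval_cases hdist : H.dist x y
    · norm_num [heq (hxy.dist_eq_zero_iff.1 hdist)]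
    · norm_num [hadj (H.dist_eq_one_iff_adj.1 hdist)]
  · have : (2 : ℝ) ≤ H.dist x y := mod_cast hfar
    linarith

lemma reachable_of_mem_closed_neighborhoods {X : Type*} {H : SimpleGraph X} {u v x y : X}
    (huv : H.Adj u v) (hx : x = u ∨ H.Adj u x) (hy : y = v ∨ H.Adj v y) : H.Reachable x y := by
  have hxu : H.Reachable x u := hx.elim (fun h => h ▸ .rfl) fun h => h.reachable.symm
  have hvy : H.Reachable v y := hy.elim (fun h => h ▸ .rfl) fun h => h.reachable
  exact hxu.trans (huv.reachable.trans hvy)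

variable {G} {i j x y : V}

lemma mem_pair_or_common_of_mem_closed_neighborhoods (hi : x = i ∨ G.Adj i x)
    (hj : x = j ∨ G.Adj j x) : x ∈ ({i, j} : Finset V) ∨ x ∈ common G i j := by
  simp only [mem_insert, mem_singleton, mem_common]
  tauto

lemma cross_adj_cases (hx : x = i ∨ G.Adj i x) (hy : y = j ∨ G.Adj j y) (hxy : G.Adj x y) :
    (x ∈ ({i, j} : Finset V) ∨ y ∈ ({i, j} : Finset V)) ∨
      (x ∈ common G i j ∧ y ∈ common G i j) ∨
      (x ∈ common G i j ∧ y ∈ uniq G j i) ∨ (x ∈ uniq G i j ∧ y ∈ common G i j) ∨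
      (x ∈ xiSet G i j ∧ y ∈ xiSet G j i) := by
  simp only [mem_insert, mem_singleton, mem_common, mem_xiSet]
  grind [mem_uniq, G.adj_comm]

lemma two_sub_dist_le_of_common (hij : G.Adj i j) (hx : x = i ∨ G.Adj i x)
    (hy : y = j ∨ G.Adj j y) :
    2 - (G.dist x y : ℝ) ≤ (𝟙[({i, j} : Finset V)] x + 𝟙[common G i j] x)
      + (𝟙[({i, j} : Finset V)] y + 𝟙[common G i j] y)
      + 𝟙[xiSet G i j ×ˢ xiSet G j i] (x, y) := by
  simp only [Set.indicator_apply, SetLike.mem_coe, mem_product]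
  refine two_sub_dist_le (reachable_of_mem_closed_neighborhoods hij hx hy) (by positivity) ?_ ?_
  · rintro rfl
    have := mem_pair_or_common_of_mem_closed_neighborhoods hx hy
    grind
  · intro hxy
    have := cross_adj_cases hx hy hxy
    grind

lemma two_sub_dist_le_of_uniq (hij : G.Adj i j) (hx : x = i ∨ G.Adj i x)
    (hy : y = j ∨ G.Adj j y) :
    2 - (G.dist x y : ℝ) ≤ (𝟙[({i, j} : Finset V)] x + 𝟙[uniq G i j] x)
      + (𝟙[({i, j} : Finset V)] y + 𝟙[uniq G j i] y)
      + (𝟙[xiSet G i j ×ˢ xiSet G j i] (x, y)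
        + 2 * 𝟙[common G i j ×ˢ common G i j] (x, y)) := by
  simp only [Set.indicator_apply, SetLike.mem_coe, mem_product]
  refine two_sub_dist_le (reachable_of_mem_closed_neighborhoods hij hx hy) (by positivity) ?_ ?_
  · rintro rfl
    have := mem_pair_or_common_of_mem_closed_neighborhoods hx hy
    grind
  · intro hxy
    have := cross_adj_cases hx hy hxy
    grind

end Distance

/-! ### Cost of a coupling of the two measures -/

section Cost

/-- The bound `min{A_min(t), B(t), D(t)}` on the mass transported along cross edges between
`ξ_i(i,j)` and `ξ_j(j,i)`. -/
def crossCap {X : Type*} [Fintype X] (H : SimpleGraph X) [DecidableRel H.Adj] (αi αj : ℝ)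
    (i j : X) (z t : ℝ) : ℝ :=
  min (min (Afun H αi i t) (Afun H αj j t))
    (min (thStar H i j / SigmaA H αi αj i j * (bBudget H i j z - frakT H i j * t))
      (((H.degree i : ℝ) + (H.degree j : ℝ) - 2 - 2 * t) / SigmaA H αi αj i j))

lemma two_mul_min_add_pos_sub_add_pos_sub (a b : ℝ) :
    2 * min a b + (pos (a - b) + pos (b - a)) = a + b := by
  unfold pos
  grind

lemma two_mul_min_add_abs_sub (a b : ℝ) : 2 * min a b + |a - b| = a + b := by
  grind

lemma PsiHat_eq {X : Type*} [Fintype X] (H : SimpleGraph X) [DecidableRel H.Adj] (αi αj : ℝ)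
    (i j : X) (z t : ℝ) :
    PsiHat H αi αj i j z t = -1 + (αi + wA H αi i) + (αj + wA H αj j)
      + pos (crossCap H αi αj i j z t)
      + min (t * wA H αi i + t * wA H αj j)
          (2 * min (wA H αi i) (wA H αj j) * t + (Afun H αi i t + Afun H αj j t)) := by
  have hi := two_mul_min_add_pos_sub_add_pos_sub αi (wA H αj j)
  have hj := two_mul_min_add_pos_sub_add_pos_sub αj (wA H αi i)
  have hw : t * wA H αi i + t * wA H αj j
      = 2 * min (wA H αi i) (wA H αj j) * t + t * |wA H αi i - wA H αj j| := by
    linear_combination -t * two_mul_min_add_abs_sub (wA H αi i) (wA H αj j)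
  rw [hw, min_add_add_left]
  simp only [PsiHat, crossCap, wA] at hi hj ⊢
  linear_combination hi + hj

lemma continuous_PsiHat {X : Type*} [Fintype X] (H : SimpleGraph X) [DecidableRel H.Adj]
    (αi αj : ℝ) (i j : X) (z : ℝ) : Continuous (PsiHat H αi αj i j z) := by
  unfold PsiHat Afun pos
  fun_prop

lemma le_add_div_inv_add_inv {e a b v w : ℝ} (hv : 0 < v) (hw : 0 < w) (ha : e ≤ a * v)
    (hb : e ≤ b * w) : e ≤ (a + b) / (v⁻¹ + w⁻¹) := by
  rw [le_div_iff₀ (by positivity), mul_add, ← div_eq_mul_inv, ← div_eq_mul_inv]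
  exact add_le_add ((div_le_iff₀ hv).2 ha) ((div_le_iff₀ hw).2 hb)

variable {G} {i j : V} {αi αj z : ℝ} {π : V → V → ℝ}

lemma rectMass_common_le (hπ : IsCoupling (mGen G αi i) (mGen G αj j) π) :
    rectMass π (common G i j) (common G i j) ≤ min (wA G αi i) (wA G αj j) * tri G i j := by
  have hi := hπ.rectMass_le_sum_left (common G i j) (common G i j)
  have hj := hπ.rectMass_le_sum_right (common G i j) (common G i j)
  rw [sum_mGen_common_left, mul_comm] at hi
  rw [sum_mGen_common_right, mul_comm] at hj
  rw [min_mul_of_nonneg _ _ (Nat.cast_nonneg _)]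
  exact le_min hi hj

lemma rectMass_xiSet_le_crossCap (hij : G.Adj i j) (hαi : αi < 1) (hαj : αj < 1)
    (hBF : cBF G i j ≤ z) (hπ : IsCoupling (mGen G αi i) (mGen G αj j) π) :
    rectMass π (xiSet G i j) (xiSet G j i) ≤ crossCap G αi αj i j z (tri G i j) := by
  have hwi := wA_pos hαi hij.degree_pos_left
  have hwj := wA_pos hαj hij.degree_pos_right
  have hleft := hπ.rectMass_le_sum_left (xiSet G i j) (xiSet G j i)
  have hright := hπ.rectMass_le_sum_right (xiSet G i j) (xiSet G j i)
  have hAi := hleft.trans (sum_mGen_xiSet_le_Afun hαi hij)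
  have hAj := hright.trans (sum_mGen_xiSet_le_Afun hαj hij.symm)
  rw [tri_comm] at hAj
  rw [sum_mGen_xiSet] at hleft hright
  have hXi := le_add_div_inv_add_inv hwi hwj hleft hright
  have hD := le_add_div_inv_add_inv hwi hwj hAi hAj
  rw [← SigmaA_eq_inv_wA_add_inv_wA] at hXi hD
  have hSigma : 0 ≤ SigmaA G αi αj i j := by rw [SigmaA_eq_inv_wA_add_inv_wA]; positivity
  refine le_min (le_min hAi hAj) (le_min (hXi.trans ?_) (hD.trans_eq ?_))
  · rw [div_mul_eq_mul_div]
    refine div_le_div_of_nonneg_right ?_ hSigma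
    calc ((xiSet G i j).card : ℝ) + (xiSet G j i).card = Xi G i j := (Nat.cast_add _ _).symm
      _ ≤ thStar G i j * C4 G i j := Xi_le_thStar_mul_C4 hij
      _ ≤ thStar G i j * (bBudget G i j z - frakT G i j * tri G i j) :=
          mul_le_mul_of_nonneg_left
            (le_sub_iff_add_le'.2 (frakT_mul_tri_add_C4_le_bBudget hij hBF))
            ((Nat.cast_nonneg _).trans (thMax_le_thStar hij))
  · congr 1
    ring

lemma two_sub_cost_le_of_common (hij : G.Adj i j)
    (hπ : IsCoupling (mGen G αi i) (mGen G αj j) π) :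
    2 - cost G π ≤ (αi + wA G αi i + tri G i j * wA G αi i)
      + (αj + wA G αj j + tri G i j * wA G αj j)
      + rectMass π (xiSet G i j) (xiSet G j i) := by
  have hbound := hπ.const_sub_cost_le (sum_mGen αi hij.degree_pos_left) fun x y hx hy =>
    two_sub_dist_le_of_common hij (eq_or_adj_of_mGen_ne_zero hx) (eq_or_adj_of_mGen_ne_zero hy)
  simpa only [add_mul, sum_add_distrib, sum_indicator_mul, sum_sum_indicator_product_mul,
    sum_mGen_pair_left αi hij, sum_mGen_pair_right αj hij, sum_mGen_common_left,
    sum_mGen_common_right] using hbound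

lemma two_sub_cost_le_of_uniq (hij : G.Adj i j)
    (hπ : IsCoupling (mGen G αi i) (mGen G αj j) π) :
    2 - cost G π ≤ (αi + wA G αi i + Afun G αi i (tri G i j))
      + (αj + wA G αj j + Afun G αj j (tri G i j))
      + (rectMass π (xiSet G i j) (xiSet G j i)
        + 2 * rectMass π (common G i j) (common G i j)) := by
  have hbound := hπ.const_sub_cost_le (sum_mGen αi hij.degree_pos_left) fun x y hx hy =>
    two_sub_dist_le_of_uniq hij (eq_or_adj_of_mGen_ne_zero hx) (eq_or_adj_of_mGen_ne_zero hy)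
  simpa only [add_mul, sum_add_distrib, sum_indicator_mul, sum_sum_indicator_product_mul,
    mul_assoc, ← mul_sum, sum_mGen_pair_left αi hij, sum_mGen_pair_right αj hij,
    sum_mGen_uniq αi hij, sum_mGen_uniq αj hij.symm, tri_comm j i] using hbound

theorem one_sub_cost_le_PsiHat_tri (hij : G.Adj i j) (hαi : αi < 1) (hαj : αj < 1)
    (hBF : cBF G i j ≤ z) (hπ : IsCoupling (mGen G αi i) (mGen G αj j) π) :
    1 - cost G π ≤ PsiHat G αi αj i j z (tri G i j) := by
  have hcross : rectMass π (xiSet G i j) (xiSet G j i)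
      ≤ pos (crossCap G αi αj i j z (tri G i j)) :=
    (rectMass_xiSet_le_crossCap hij hαi hαj hBF hπ).trans (le_max_left _ _)
  rw [PsiHat_eq, ← sub_le_iff_le_add']
  apply le_min
  · linarith [two_sub_cost_le_of_common hij hπ]
  · linarith [two_sub_cost_le_of_uniq hij hπ, rectMass_common_le hπ]

end Cost

theorem stmt14_general {i j : V} (hij : G.Adj i j) {αi αj : ℝ}
    (hαi : αi ∈ Set.Ico (0 : ℝ) 1) (hαj : αj ∈ Set.Ico (0 : ℝ) 1)
    {z : ℝ} (hBF : cBF G i j ≤ z) :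
    1 - W1 G (mGen G αi i) (mGen G αj j)
      ≤ sSup ((fun t => PsiHat G αi αj i j z t) '' Set.Icc 0 (triBound G i j z)) := by
  have hprobi := isProb_mGen (Set.Ico_subset_Icc_self hαi) hij.degree_pos_left
  have hprobj := isProb_mGen (Set.Ico_subset_Icc_self hαj) hij.degree_pos_right
  have hW1 : 1 - PsiHat G αi αj i j z (tri G i j) ≤ W1 G (mGen G αi i) (mGen G αj j) :=
    le_W1 hprobi hprobj fun π hπ =>
      sub_le_comm.1 (one_sub_cost_le_PsiHat_tri hij hαi.2 hαj.2 hBF hπ)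
  have hbdd : BddAbove ((fun t => PsiHat G αi αj i j z t) '' Set.Icc 0 (triBound G i j z)) :=
    isCompact_Icc.bddAbove_image (continuous_PsiHat G αi αj i j z).continuousOn
  exact (sub_le_comm.1 hW1).trans
    (le_csSup hbdd (Set.mem_image_of_mem _ (tri_mem_Icc_triBound hij hBF)))

/-- BF-to-OR upper transfer modulus
`c_OR(i,j) ≤ max_{t ∈ [0,△_max]} Ψ̂(t)`. -/
theorem stmt14 (hG : G.Connected) (i j : V) (hij : G.Adj i j)
    (hmin : 2 ≤ rhoMin G i j) (αi αj : ℝ)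
    (hαi : αi ∈ Set.Ico (0:ℝ) 1) (hαj : αj ∈ Set.Ico (0:ℝ) 1)
    (z : ℝ) (hBF : cBF G i j ≤ z) :
    1 - W1 G (mGen G αi i) (mGen G αj j)
      ≤ sSup ((fun t => PsiHat G αi αj i j z t) '' Set.Icc 0 (triBound G i j z)) := by
  exact stmt14_general G hij hαi hαj hBF

end

end Curv
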